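/- arXiv:1403.7801 — 2 statements merged into one kernel-verified Lean document; each statement's English description precedes it below -/
import Mathlib

section
/- Let N = p₁⋯p_r be a product of distinct odd primes, let m be a positive integer with gcd(N,m) = 1, and for each i let ε_i be a non-square modulo p_i. Let Γ_ns^{ε⃗}(N,m) be the intersection of the Cartan non-split groups Γ_ns^{ε_i}(p_i) for i = 1,…,r together with Γ₀(m). Then Γ(N) ∩ Γ₀(m) is a normal subgroup of Γ_ns^{ε⃗}(N,m) and the quotient group Γ_ns^{ε⃗}(N,m)/(Γ(N) ∩ Γ₀(m)) is isomorphic to the product ∏_{i=1}^r ℤ/(p_i+1)ℤ. -/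
/-!
The quotient is computed by reducing modulo every `p i` at once. The kernel of
`mixedRed : Γ_ns(N, m) → ∏ᵢ CnsSL (p i) (ε i)` is `Γ(N) ∩ Γ₀(m)` by the Chinese remainder theorem
(`ker_mixedRed`), and `mixedRed` is onto (`mixedRed_surjective`): local matrices at the primes `p i`
and the identity matrix modulo `m` glue to an integral matrix of determinant `1` modulo `N * m`, and
such a matrix is congruent to one in `SL₂(ℤ)` (`exists_SL2_lift`); congruence to the identity
modulo `m` places the lift in `Γ₀(m)`.

Each local factor is the group of norm-one elements of the field `𝔽_p(√ε)`, via
`(a b; εb a) ↦ a + b√ε`. It is cyclic, being a finite subgroup of the multiplicative group of a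
field, and has order `(p² - 1) / (p - 1) = p + 1` because the norm `𝔽_p(√ε)ˣ → 𝔽_pˣ` is surjective.
-/

open Matrix

/-- The Cartan non-split ring mod `p`: the set of matrices `(a b; c d)` over `𝔽_p`
with `a = d` and `c = ε * b`. -/
def CnsSet (p : ℕ) (ε : ZMod p) : Set (Matrix (Fin 2) (Fin 2) (ZMod p)) :=
  {A | A 0 0 = A 1 1 ∧ A 1 0 = ε * A 0 1}

lemma cns_one (p : ℕ) (ε : ZMod p) : (1 : Matrix (Fin 2) (Fin 2) (ZMod p)) ∈ CnsSet p ε := by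
  simp [CnsSet, Matrix.one_apply]

lemma cns_mul {p : ℕ} {ε : ZMod p} {A B : Matrix (Fin 2) (Fin 2) (ZMod p)}
    (hA : A ∈ CnsSet p ε) (hB : B ∈ CnsSet p ε) : A * B ∈ CnsSet p ε := by
  obtain ⟨hA1, hA2⟩ := hA
  obtain ⟨hB1, hB2⟩ := hB
  constructor <;>
    · simp only [Matrix.mul_apply, Fin.sum_univ_two, hA1, hA2, hB1, hB2]
      ring

lemma cns_adj {p : ℕ} {ε : ZMod p} {A : Matrix (Fin 2) (Fin 2) (ZMod p)}
    (hA : A ∈ CnsSet p ε) : A.adjugate ∈ CnsSet p ε := by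
  obtain ⟨hA1, hA2⟩ := hA
  rw [Matrix.adjugate_fin_two]
  refine ⟨by simp [hA1], by simp [hA2]⟩

/-- Reduction modulo `p` on `SL₂`. -/
def redSL (p : ℕ) :
    Matrix.SpecialLinearGroup (Fin 2) ℤ →* Matrix.SpecialLinearGroup (Fin 2) (ZMod p) :=
  Matrix.SpecialLinearGroup.map (Int.castRingHom (ZMod p))

/-- The determinant-one part of the Cartan non-split ring, as a subgroup of `SL₂(𝔽_p)`. -/
def CnsSL (p : ℕ) (ε : ZMod p) : Subgroup (Matrix.SpecialLinearGroup (Fin 2) (ZMod p)) where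
  carrier := {A | (A : Matrix (Fin 2) (Fin 2) (ZMod p)) ∈ CnsSet p ε}
  one_mem' := by simpa using cns_one p ε
  mul_mem' := by
    intro A B hA hB
    simpa using cns_mul hA hB
  inv_mem' := by
    intro A hA
    simp only [Set.mem_setOf_eq, Matrix.SpecialLinearGroup.coe_inv] at hA ⊢
    exact cns_adj hA

/-- The Cartan non-split group `Γ_ns^ε(p)`: the subgroup of `SL₂(ℤ)` of matrices whose
reduction modulo `p` lies in the Cartan non-split ring. -/
def GammaNs (p : ℕ) (ε : ZMod p) : Subgroup (Matrix.SpecialLinearGroup (Fin 2) ℤ) :=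
  (CnsSL p ε).comap (redSL p)

open CongruenceSubgroup in
instance mixed_normal (r : ℕ) (p : Fin r → ℕ) (ε : ∀ i, ZMod (p i)) (N m : ℕ) :
    ((Gamma N ⊓ Gamma0 m).subgroupOf
      ((⨅ i, GammaNs (p i) (ε i)) ⊓ Gamma0 m)).Normal := by
  constructor
  intro x hx g
  rw [Subgroup.mem_subgroupOf, Subgroup.mem_inf] at hx ⊢
  have hg : (g : Matrix.SpecialLinearGroup (Fin 2) ℤ) ∈ Gamma0 m :=
    (Subgroup.mem_inf.mp g.2).2
  constructor
  · simpa using (Gamma_normal N).conj_mem _ hx.1 (g : Matrix.SpecialLinearGroup (Fin 2) ℤ)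
  · simpa using mul_mem (mul_mem hg hx.2) (inv_mem hg)

/-! ### Lifting local matrices to `Γ₀(m)` -/

/-- The residue classes of an integer modulo the coprime moduli `p i` and `m` can be prescribed
independently. -/
lemma exists_int_crt {r : ℕ} {p : Fin r → ℕ} (hpair : Pairwise fun i j => Nat.Coprime (p i) (p j))
    {m : ℕ} (hcop : Nat.Coprime (∏ i, p i) m) (x : ∀ i, ZMod (p i)) (y : ZMod m) :
    ∃ z : ℤ, (∀ i, (z : ZMod (p i)) = x i) ∧ (z : ZMod m) = y := by
  let e := ZMod.prodEquivPi p hpair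
  let f := ZMod.chineseRemainder hcop
  obtain ⟨z, hz⟩ := ZMod.intCast_surjective (f.symm (e.symm x, y))
  have h := congrArg f hz
  rw [map_intCast, RingEquiv.apply_symm_apply] at h
  have h1 := congrArg (fun t => e t.1) h
  have h2 := congrArg Prod.snd h
  refine ⟨z, fun i => ?_, by simpa using h2⟩
  simp only [Prod.fst_intCast, map_intCast, RingEquiv.apply_symm_apply] at h1
  simpa using congrFun h1 i

/-- If `c ≠ 0` and no prime divides `c`, `d` and `M` simultaneously, some member of the progression
`d + Mℤ` is coprime to `c`. -/
lemma exists_coprime_add_mul {c d M : ℤ} (hc : c ≠ 0)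
    (h : ∀ q : ℤ, Prime q → q ∣ c → q ∣ d → ¬ q ∣ M) :
    ∃ t : ℤ, IsCoprime c (d + M * t) := by
  classical
  -- `t` collects the primes dividing `c` but not `d`: each prime factor of `c` then divides exactly
  -- one of the two summands.
  let S : Finset ℕ := c.natAbs.primeFactors.filter fun q : ℕ => ¬ (q : ℤ) ∣ d
  refine ⟨∏ q ∈ S, (q : ℤ), isCoprime_of_prime_dvd (fun h0 => hc h0.1) ?_⟩
  intro q hq hqc hqd
  by_cases hd : q ∣ d
  · have h1 : q ∣ M * ∏ q ∈ S, (q : ℤ) := (dvd_add_right hd).mp hqd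
    rcases hq.dvd_or_dvd h1 with h2 | h2
    · exact h q hq hqc hd h2
    · obtain ⟨q', hq', hdvd⟩ := (hq.dvd_finsetProd_iff _).mp h2
      have hmem := Finset.mem_filter.mp hq'
      have hp' : Prime (q' : ℤ) :=
        Nat.prime_iff_prime_int.mp (Nat.prime_of_mem_primeFactors hmem.1)
      exact hmem.2 (((hq.dvd_prime_iff_associated hp').mp hdvd).symm.dvd.trans hd)
  · have hmem : q.natAbs ∈ S := by
      refine Finset.mem_filter.mpr ⟨Nat.mem_primeFactors.mpr
        ⟨Int.prime_iff_natAbs_prime.mp hq, Int.natAbs_dvd_natAbs.mpr hqc, by simpa using hc⟩, ?_⟩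
      rwa [Int.natAbs_dvd]
    have h1 : q ∣ ∏ q ∈ S, (q : ℤ) :=
      (Int.dvd_natAbs.mpr dvd_rfl).trans (Finset.dvd_prod_of_mem (fun q : ℕ => (q : ℤ)) hmem)
    exact hd ((dvd_add_left (h1.mul_left M)).mp hqd)

/-- Strong approximation for `SL₂`: reduction `SL₂(ℤ) → SL₂(ℤ/M)` is surjective. -/
lemma exists_SL2_lift {M : ℤ} (hM : M ≠ 0) {a b c d : ℤ} (hdet : M ∣ a * d - b * c - 1) :
    ∃ g : SpecialLinearGroup (Fin 2) ℤ,
      M ∣ g 0 0 - a ∧ M ∣ g 0 1 - b ∧ M ∣ g 1 0 - c ∧ M ∣ g 1 1 - d := by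
  -- Replacing a zero lower-left entry by `M`, it may be assumed nonzero.
  obtain ⟨c', hc', hcc⟩ : ∃ c' : ℤ, c' ≠ 0 ∧ M ∣ c' - c := by
    by_cases hc : c = 0
    · exact ⟨M, hM, by simp [hc]⟩
    · exact ⟨c, hc, by simp⟩
  have hdet2 : M ∣ a * d - b * c' - 1 := by
    rw [show a * d - b * c' - 1 = a * d - b * c - 1 - b * (c' - c) by ring]
    exact hdet.sub (hcc.mul_left b)
  obtain ⟨t, u, v, huv⟩ := exists_coprime_add_mul (d := d) (M := M) hc' (by
    intro q hq h1 h2 h3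
    have h4 : q ∣ 1 := by
      rw [show 1 = a * d - b * c' - (a * d - b * c' - 1) by ring]
      exact ((h2.mul_left a).sub (h1.mul_left b)).sub (h3.trans hdet2)
    exact hq.not_isUnit (isUnit_of_dvd_one h4))
  obtain ⟨k, hk⟩ := hdet2
  -- The new lower row is primitive, with Bézout coefficients `u, v`; the upper row is corrected by
  -- multiples of `M` to bring the determinant from `1 + M * s` down to `1`.
  let s := k + a * t
  refine ⟨⟨!![a - M * (s * v), b + M * (s * u); c', d + M * t], ?_⟩, ?_, ?_, hcc, ?_⟩
  · rw [Matrix.det_fin_two_of]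
    linear_combination hk - M * s * huv
  · exact ⟨-(s * v), by simp⟩
  · exact ⟨s * u, by simp⟩
  · exact ⟨t, by simp⟩

/-- `Γ₀(m)` surjects onto `∏ᵢ SL₂(ℤ/pᵢ)` when the moduli are coprime. -/
lemma exists_Gamma0_lift {r : ℕ} {p : Fin r → ℕ}
    (hpair : Pairwise fun i j => Nat.Coprime (p i) (p j)) (hp0 : ∀ i, p i ≠ 0)
    {m : ℕ} (hm : 0 < m) (hcop : Nat.Coprime (∏ i, p i) m)
    (B : ∀ i, SpecialLinearGroup (Fin 2) (ZMod (p i))) :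
    ∃ g ∈ CongruenceSubgroup.Gamma0 m, ∀ i, redSL (p i) g = B i := by
  choose A hA hAm using fun j k : Fin 2 =>
    exists_int_crt hpair hcop (fun i => B i j k) ((1 : Matrix (Fin 2) (Fin 2) (ZMod m)) j k)
  have hdet : ((∏ i, p i : ℕ) * m : ℤ) ∣ A 0 0 * A 1 1 - A 0 1 * A 1 0 - 1 := by
    refine IsCoprime.mul_dvd (Nat.isCoprime_iff_coprime.mpr hcop) ?_ ?_
    · push_cast
      refine Fintype.prod_dvd_of_coprime
        (fun i j hij => Nat.isCoprime_iff_coprime.mpr (hpair hij)) fun i => ?_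
      rw [← ZMod.intCast_zmod_eq_zero_iff_dvd]
      push_cast
      rw [hA, hA, hA, hA, ← Matrix.det_fin_two, (B i).2, sub_self]
    · rw [← ZMod.intCast_zmod_eq_zero_iff_dvd]
      push_cast
      simp [hAm]
  obtain ⟨g, h00, h01, h10, h11⟩ := exists_SL2_lift
    (by exact_mod_cast mul_ne_zero (Finset.prod_ne_zero_iff.mpr fun i _ => hp0 i) hm.ne') hdet
  have hmM : (m : ℤ) ∣ (∏ i, p i : ℕ) * m := dvd_mul_left _ _
  have hpM : ∀ i, (p i : ℤ) ∣ (∏ i, p i : ℕ) * m := fun i =>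
    (Int.natCast_dvd_natCast.mpr (Finset.dvd_prod_of_mem p (Finset.mem_univ i))).mul_right _
  refine ⟨g, ?_, fun i => ?_⟩
  · have h := (ZMod.intCast_zmod_eq_zero_iff_dvd _ m).mpr (hmM.trans h10)
    rw [CongruenceSubgroup.Gamma0_mem]
    simpa [hAm] using h
  · have key : ∀ j k, (p i : ℤ) ∣ g j k - A j k → ((g j k : ℤ) : ZMod (p i)) = B i j k := by
      intro j k h
      have h := (ZMod.intCast_zmod_eq_zero_iff_dvd _ (p i)).mpr h
      rw [← hA j k i]
      simpa [sub_eq_zero] using h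
    ext j k
    change ((g j k : ℤ) : ZMod (p i)) = B i j k
    fin_cases j <;> fin_cases k <;> exact key _ _ ((hpM i).trans ‹_›)

/-! ### The non-split Cartan group at one prime -/

section Local

variable {p : ℕ} [Fact p.Prime] {ε : ZMod p}

lemma fact_of_not_isSquare (hε : ¬ IsSquare ε) : Fact (∀ r : ZMod p, r ^ 2 ≠ ε + 0 * r) :=
  ⟨fun r h => hε ⟨r, by rw [← sq, h]; ring⟩⟩

open scoped QuadraticAlgebra in
/-- The determinant-one non-split Cartan group embeds in the field `𝔽_p(√ε)` by
`(a b; εb a) ↦ a + b√ε`. -/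
def cnsHom (p : ℕ) (ε : ZMod p) : CnsSL p ε →* QuadraticAlgebra (ZMod p) ε 0 where
  toFun A := ⟨A.1 0 0, A.1 0 1⟩
  map_one' := by ext <;> simp
  map_mul' A B := by
    obtain ⟨A, hA1, hA2⟩ := A
    obtain ⟨B, hB1, hB2⟩ := B
    ext
    · simp [Matrix.mul_apply, Fin.sum_univ_two, hB2]; ring
    · simp [Matrix.mul_apply, Fin.sum_univ_two, hB1]

lemma cnsHom_injective : Function.Injective (cnsHom p ε) := by
  rintro ⟨A, hA1, hA2⟩ ⟨B, hB1, hB2⟩ h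
  have h0 : A 0 0 = B 0 0 := congrArg QuadraticAlgebra.re h
  have h1 : A 0 1 = B 0 1 := congrArg QuadraticAlgebra.im h
  ext j k
  fin_cases j <;> fin_cases k <;> simp_all

lemma norm_cnsHom (A : CnsSL p ε) : (cnsHom p ε A).norm = 1 := by
  obtain ⟨A, hA1, hA2⟩ := A
  have h := A.2
  rw [Matrix.det_fin_two] at h
  rw [QuadraticAlgebra.norm_def]
  simp only [cnsHom, MonoidHom.coe_mk, OneHom.coe_mk]
  linear_combination h + A 0 0 * hA1 + A 0 1 * hA2

lemma exists_cnsHom_eq {z : QuadraticAlgebra (ZMod p) ε 0} (hz : z.norm = 1) :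
    ∃ A, cnsHom p ε A = z := by
  rw [QuadraticAlgebra.norm_def] at hz
  refine ⟨⟨⟨!![z.re, z.im; ε * z.im, z.re], ?_⟩, ?_, ?_⟩, ?_⟩
  · rw [Matrix.det_fin_two_of]; linear_combination hz
  · simp
  · simp
  · ext <;> simp [cnsHom]

instance : Finite (QuadraticAlgebra (ZMod p) ε 0) :=
  Finite.of_equiv _ (QuadraticAlgebra.equivProd ε 0).symm

lemma card_quadraticAlgebra : Nat.card (QuadraticAlgebra (ZMod p) ε 0) = p * p := by
  rw [Nat.card_congr (QuadraticAlgebra.equivProd ε 0), Nat.card_prod, Nat.card_zmod]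

/-- Every element of `𝔽_p` is a norm from `𝔽_p(√ε)`: the values of `a²` and of `εb² + u` each fill
more than half of `𝔽_p`. -/
lemma exists_quadratic_norm_eq (hodd : Odd p) (hε : ε ≠ 0) (u : ZMod p) :
    ∃ z : QuadraticAlgebra (ZMod p) ε 0, z.norm = u := by
  open Polynomial in
  obtain ⟨a, b, h⟩ := FiniteField.exists_root_sum_quadratic (R := ZMod p)
    (f := X ^ 2 - C u) (g := C (-ε) * X ^ 2) (degree_X_pow_sub_C (by decide) _)
    (degree_C_mul_X_pow 2 (neg_ne_zero.mpr hε)) (by rw [ZMod.card]; exact Nat.odd_iff.mp hodd)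
  simp only [Polynomial.eval_sub, Polynomial.eval_mul, Polynomial.eval_pow, Polynomial.eval_X,
    Polynomial.eval_C] at h
  refine ⟨⟨a, b⟩, ?_⟩
  rw [QuadraticAlgebra.norm_def]
  linear_combination h

lemma isCyclic_cnsSL (hε : ¬ IsSquare ε) : IsCyclic (CnsSL p ε) := by
  have := fact_of_not_isSquare hε
  have : Finite (CnsSL p ε) := Finite.of_injective _ (cnsHom_injective (p := p) (ε := ε))
  exact isCyclic_of_injective_ringHom (cnsHom p ε) cnsHom_injective

/-- The group consists of the norm-one elements of `𝔽_p(√ε)ˣ`, hence has order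
`(p² - 1) / (p - 1)`. -/
lemma card_cnsSL (hodd : Odd p) (hε : ¬ IsSquare ε) : Nat.card (CnsSL p ε) = p + 1 := by
  have := fact_of_not_isSquare hε
  have hε0 : ε ≠ 0 := fun h => hε (h ▸ IsSquare.zero)
  let K := QuadraticAlgebra (ZMod p) ε 0
  let φ : Kˣ →* (ZMod p)ˣ := Units.map QuadraticAlgebra.norm
  have hφ : Function.Surjective φ := by
    intro u
    obtain ⟨z, hz⟩ := exists_quadratic_norm_eq hodd hε0 (u : ZMod p)
    have hz0 : z ≠ 0 := fun h => u.ne_zero (by rw [← hz, h, QuadraticAlgebra.norm_zero])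
    exact ⟨Units.mk0 z hz0, Units.ext hz⟩
  have hcard : Nat.card (CnsSL p ε) = Nat.card φ.ker := by
    refine Nat.card_congr (Equiv.ofBijective
      (fun A => ⟨(cnsHom p ε).toHomUnits A, Units.ext (norm_cnsHom A)⟩) ⟨fun A B h => ?_, ?_⟩)
    · exact cnsHom_injective (congrArg (fun z : φ.ker => ((z : Kˣ) : K)) h)
    · rintro ⟨z, hz⟩
      obtain ⟨A, hA⟩ := exists_cnsHom_eq (congrArg Units.val hz)
      exact ⟨A, Subtype.ext (Units.ext hA)⟩
  have h1 := φ.ker.card_eq_card_quotient_mul_card_subgroup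
  rw [Nat.card_congr (QuotientGroup.quotientKerEquivOfSurjective φ hφ).toEquiv, ← hcard,
    Nat.card_units, Nat.card_units, card_quadraticAlgebra, Nat.card_zmod] at h1
  have hp1 : 1 < p := (Fact.out : p.Prime).one_lt
  obtain ⟨q, rfl⟩ : ∃ q, p = q + 1 := ⟨p - 1, by omega⟩
  have h2 : (q + 1) * (q + 1) - 1 = q * (q + 2) := by
    rw [Nat.sub_eq_iff_eq_add (by nlinarith)]; ring
  rw [h2, Nat.add_sub_cancel] at h1
  exact (Nat.eq_of_mul_eq_mul_left (by omega) h1).symm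

end Local

/-! ### Simultaneous reduction -/

/-- Simultaneous reduction modulo the `p i`, from the mixed Cartan group to the product of its
local components. -/
def mixedRed {r : ℕ} (p : Fin r → ℕ) (ε : ∀ i, ZMod (p i)) (m : ℕ) :
    ↥((⨅ i, GammaNs (p i) (ε i)) ⊓ CongruenceSubgroup.Gamma0 m) →* ∀ i, CnsSL (p i) (ε i) :=
  MonoidHom.pi fun i => ((redSL (p i)).comp (Subgroup.subtype _)).codRestrict (CnsSL (p i) (ε i))
    fun g => Subgroup.mem_iInf.mp (Subgroup.mem_inf.mp g.2).1 i

lemma Gamma_prod_iff {r : ℕ} {p : Fin r → ℕ}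
    (hpair : Pairwise fun i j => Nat.Coprime (p i) (p j)) (g : SpecialLinearGroup (Fin 2) ℤ) :
    g ∈ CongruenceSubgroup.Gamma (∏ i, p i) ↔ ∀ i, redSL (p i) g = 1 := by
  have key : ∀ x : ℤ, ((x : ZMod (∏ i, p i)) = 0 ↔ ∀ i, (x : ZMod (p i)) = 0) := by
    intro x
    simp only [ZMod.intCast_zmod_eq_zero_iff_dvd]
    refine ⟨fun h i => (Int.natCast_dvd_natCast.mpr
      (Finset.dvd_prod_of_mem p (Finset.mem_univ i))).trans h, fun h => ?_⟩
    push_cast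
    exact Fintype.prod_dvd_of_coprime
      (fun i j hij => Nat.isCoprime_iff_coprime.mpr (hpair hij)) h
  have key1 : ∀ x : ℤ, ((x : ZMod (∏ i, p i)) = 1 ↔ ∀ i, (x : ZMod (p i)) = 1) := by
    intro x
    simpa [sub_eq_zero] using key (x - 1)
  have hred : ∀ i, redSL (p i) g = 1 ↔ g ∈ CongruenceSubgroup.Gamma (p i) := fun i => Iff.rfl
  simp only [hred, CongruenceSubgroup.Gamma_mem, key, key1, forall_and]

lemma ker_mixedRed {r : ℕ} {p : Fin r → ℕ}
    (hpair : Pairwise fun i j => Nat.Coprime (p i) (p j)) (ε : ∀ i, ZMod (p i)) (m : ℕ) :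
    (mixedRed p ε m).ker = (CongruenceSubgroup.Gamma (∏ i, p i) ⊓
      CongruenceSubgroup.Gamma0 m).subgroupOf
        ((⨅ i, GammaNs (p i) (ε i)) ⊓ CongruenceSubgroup.Gamma0 m) := by
  ext g
  rw [MonoidHom.mem_ker, Subgroup.mem_subgroupOf, Subgroup.mem_inf, Gamma_prod_iff hpair,
    and_iff_left (Subgroup.mem_inf.mp g.2).2, funext_iff]
  exact forall_congr' fun i => Subtype.ext_iff

lemma mixedRed_surjective {r : ℕ} {p : Fin r → ℕ}
    (hpair : Pairwise fun i j => Nat.Coprime (p i) (p j)) (hp0 : ∀ i, p i ≠ 0)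
    (ε : ∀ i, ZMod (p i)) {m : ℕ} (hm : 0 < m) (hcop : Nat.Coprime (∏ i, p i) m) :
    Function.Surjective (mixedRed p ε m) := by
  intro B
  obtain ⟨g, hg, hB⟩ := exists_Gamma0_lift hpair hp0 hm hcop fun i => (B i).1
  refine ⟨⟨g, Subgroup.mem_inf.mpr ⟨Subgroup.mem_iInf.mpr fun i => ?_, hg⟩⟩, ?_⟩
  · change redSL (p i) g ∈ CnsSL (p i) (ε i)
    rw [hB]
    exact (B i).2
  · exact funext fun i => Subtype.ext (hB i)

open CongruenceSubgroup in
/-- For `N = p₁⋯p_r` a product of distinct odd primes and `m` coprime to `N`, the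
subgroup `Γ(N) ∩ Γ₀(m)` is normal in `Γ_ns^{ε⃗}(N,m) = ⋂ᵢ Γ_ns^{εᵢ}(pᵢ) ∩ Γ₀(m)` with
quotient isomorphic to `∏ᵢ ℤ/(pᵢ+1)ℤ`. -/
theorem mixed_quotient (r : ℕ) (p : Fin r → ℕ) (hp : ∀ i, (p i).Prime ∧ Odd (p i))
    (hinj : Function.Injective p) (ε : ∀ i, ZMod (p i)) (hε : ∀ i, ¬ IsSquare (ε i))
    (m : ℕ) (hm : 0 < m) (hcop : Nat.Coprime (∏ i, p i) m) :
    ((Gamma (∏ i, p i) ⊓ Gamma0 m).subgroupOf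
        ((⨅ i, GammaNs (p i) (ε i)) ⊓ Gamma0 m)).Normal ∧
    Nonempty ((↥((⨅ i, GammaNs (p i) (ε i)) ⊓ Gamma0 m) ⧸
        ((Gamma (∏ i, p i) ⊓ Gamma0 m).subgroupOf
          ((⨅ i, GammaNs (p i) (ε i)) ⊓ Gamma0 m)))
      ≃* (∀ i, Multiplicative (ZMod (p i + 1)))) := by
  have hpair : Pairwise fun i j => Nat.Coprime (p i) (p j) := fun i j hij =>
    (Nat.coprime_primes (hp i).1 (hp j).1).mpr (hinj.ne hij)
  refine ⟨mixed_normal r p ε _ m, ⟨?_⟩⟩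
  refine (QuotientGroup.quotientMulEquivOfEq (ker_mixedRed hpair ε m).symm).trans
    ((QuotientGroup.quotientKerEquivOfSurjective _
      (mixedRed_surjective hpair (fun i => (hp i).1.ne_zero) ε hm hcop)).trans
      (MulEquiv.piCongrRight fun i => ?_))
  have : Fact (p i).Prime := ⟨(hp i).1⟩
  have := isCyclic_cnsSL (hε i)
  exact mulEquivOfCyclicCardEq (by
    rw [card_cnsSL (hp i).2 (hε i), Nat.card_congr Multiplicative.toAdd, Nat.card_zmod])
end

section
/- Let q be a prime, let k ≥ 1 be an integer, and let M ∈ M₂(ℤ) be an integer matrix whose characteristic polynomial modulo q has two distinct roots in 𝔽_q. Then there exists A ∈ SL₂(ℤ) such that A·M·A⁻¹ is congruent to an upper triangular matrix modulo q^k. -/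
open Matrix Polynomial

/-!
The lower left entry of `A * M * A⁻¹` is killed modulo `q`, then modulo higher powers of `q` by
Hensel lifting.

Modulo `q`, an eigenvalue of `M` has a left eigenvector; unless `q` already divides `M 1 0`, it
can be normalised to `(1, d)`, which is visibly the bottom row of an element of `SL₂(ℤ)`.

If `q ^ k ∣ N 1 0` with `k ≥ 1`, where `N = A * M * A⁻¹`, then conjugating `N` by
`!![1, 0; q ^ k * t, 1]` changes the lower left entry to
`N 1 0 + (N 0 0 - N 1 1) * q ^ k * t - N 0 1 * q ^ (2 * k) * t ^ 2`. A suitable `t` makes this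
divisible by `q ^ (k + 1)` as soon as `N 0 0 - N 1 1` is a unit modulo `q`. It is one because the
discriminant `tr ^ 2 - 4 * det` is invariant under conjugation, is congruent to
`(N 0 0 - N 1 1) ^ 2` modulo `q`, and is nonzero there since the two roots are distinct.
-/

/-- An explicit form of the lower left entry: a binary quadratic form in the bottom row of `A`. -/
lemma conj_lower_left (A : Matrix.SpecialLinearGroup (Fin 2) ℤ) (M : Matrix (Fin 2) (Fin 2) ℤ) :
    ((A : Matrix (Fin 2) (Fin 2) ℤ) * M *
      ((A⁻¹ : Matrix.SpecialLinearGroup (Fin 2) ℤ) : Matrix (Fin 2) (Fin 2) ℤ)) 1 0 =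
      M 1 0 * A 1 1 ^ 2 + (M 0 0 - M 1 1) * (A 1 0 * A 1 1) - M 0 1 * A 1 0 ^ 2 := by
  rw [Matrix.SpecialLinearGroup.coe_inv, Matrix.adjugate_fin_two]
  simp [Matrix.mul_apply, Fin.sum_univ_two]
  ring

lemma trace_det_of_charpoly {K : Type*} [Field K] (N : Matrix (Fin 2) (Fin 2) K) (x y : K)
    (hxy : x ≠ y) (h : N.charpoly = (X - C x) * (X - C y)) :
    N 0 0 + N 1 1 = x + y ∧ N 0 0 * N 1 1 - N 0 1 * N 1 0 = x * y := by
  rw [Matrix.charpoly_fin_two, Matrix.trace_fin_two, Matrix.det_fin_two] at h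
  have hx := congrArg (Polynomial.eval x) h
  have hy := congrArg (Polynomial.eval y) h
  simp only [eval_add, eval_sub, eval_mul, eval_pow, eval_X, eval_C, sub_self, zero_mul,
    mul_zero] at hx hy
  have ht : N 0 0 + N 1 1 = x + y := by
    apply mul_left_cancel₀ (sub_ne_zero.mpr hxy)
    linear_combination hy - hx
  exact ⟨ht, by linear_combination hx + x * ht⟩

lemma exists_conj_mod_prime (q : ℕ) [Fact q.Prime] (M : Matrix (Fin 2) (Fin 2) ℤ) (x y : ZMod q)
    (ht : (M 0 0 : ZMod q) + M 1 1 = x + y)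
    (hd : (M 0 0 : ZMod q) * M 1 1 - M 0 1 * M 1 0 = x * y) :
    ∃ A : Matrix.SpecialLinearGroup (Fin 2) ℤ, (q : ℤ) ∣
      ((A : Matrix (Fin 2) (Fin 2) ℤ) * M *
        ((A⁻¹ : Matrix.SpecialLinearGroup (Fin 2) ℤ) : Matrix (Fin 2) (Fin 2) ℤ)) 1 0 := by
  by_cases h : (M 1 0 : ZMod q) = 0
  · refine ⟨1, ?_⟩
    simpa using (ZMod.intCast_zmod_eq_zero_iff_dvd (M 1 0) q).mp h
  · -- `(1, d)` is the left eigenvector of `M` modulo `q` with eigenvalue `x`.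
    obtain ⟨d, hdd⟩ := ZMod.intCast_surjective ((x - (M 0 0 : ZMod q)) / (M 1 0 : ZMod q))
    have hd' : (M 1 0 : ZMod q) * d = x - M 0 0 := by
      rw [hdd]; field_simp
    obtain ⟨A, hA0, hA1⟩ : ∃ A : Matrix.SpecialLinearGroup (Fin 2) ℤ, A 1 0 = 1 ∧ A 1 1 = d :=
      ⟨⟨!![0, -1; 1, d], by simp [Matrix.det_fin_two]⟩, rfl, rfl⟩
    refine ⟨A, ?_⟩
    rw [conj_lower_left, hA0, hA1, ← ZMod.intCast_zmod_eq_zero_iff_dvd]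
    push_cast
    apply mul_left_cancel₀ h
    linear_combination ((M 1 0 : ZMod q) * d + x - M 0 0 + M 0 0 - M 1 1) * hd' - x * ht + hd

/-- The Hensel step, in terms of a single matrix whose discriminant is prime to `q`. -/
lemma exists_lift (q : ℕ) (hq : q.Prime) (k : ℕ) (hk : 1 ≤ k) (N : Matrix (Fin 2) (Fin 2) ℤ)
    (hD : ¬ (q : ℤ) ∣ N.trace ^ 2 - 4 * N.det) (hN : (q : ℤ) ^ k ∣ N 1 0) :
    ∃ A : Matrix.SpecialLinearGroup (Fin 2) ℤ, (q : ℤ) ^ (k + 1) ∣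
      ((A : Matrix (Fin 2) (Fin 2) ℤ) * N *
        ((A⁻¹ : Matrix.SpecialLinearGroup (Fin 2) ℤ) : Matrix (Fin 2) (Fin 2) ℤ)) 1 0 := by
  have hqN : (q : ℤ) ∣ N 1 0 := (dvd_pow_self _ (by omega)).trans hN
  have hu : ¬ (q : ℤ) ∣ N 0 0 - N 1 1 := by
    intro h
    apply hD
    rw [Matrix.trace_fin_two, Matrix.det_fin_two]
    have : (N 0 0 + N 1 1) ^ 2 - 4 * (N 0 0 * N 1 1 - N 0 1 * N 1 0) =
        (N 0 0 - N 1 1) * (N 0 0 - N 1 1) + 4 * N 0 1 * N 1 0 := by ring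
    rw [this]
    exact dvd_add (h.mul_right _) (hqN.mul_left _)
  obtain ⟨u, v, huv⟩ := ((Nat.prime_iff_prime_int.mp hq).coprime_iff_not_dvd).mpr hu
  obtain ⟨e, he⟩ := hN
  obtain ⟨j, rfl⟩ : ∃ j, k = j + 1 := ⟨k - 1, by omega⟩
  -- `v` inverts `N 0 0 - N 1 1` modulo `q`, so `t = -v * e` solves the linearised equation.
  obtain ⟨A, hA0, hA1⟩ : ∃ A : Matrix.SpecialLinearGroup (Fin 2) ℤ,
      A 1 0 = (q : ℤ) ^ (j + 1) * (-v * e) ∧ A 1 1 = 1 :=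
    ⟨⟨!![1, 0; (q : ℤ) ^ (j + 1) * (-v * e), 1], by simp [Matrix.det_fin_two]⟩, rfl, rfl⟩
  refine ⟨A, ?_⟩
  rw [conj_lower_left, hA0, hA1]
  refine ⟨e * u - N 0 1 * (q : ℤ) ^ j * (v * e) ^ 2, ?_⟩
  rw [he]
  linear_combination (-(q : ℤ) ^ (j + 1) * e) * huv

lemma exists_conj_dvd (q : ℕ) (hq : q.Prime) (M : Matrix (Fin 2) (Fin 2) ℤ)
    (hD : ¬ (q : ℤ) ∣ M.trace ^ 2 - 4 * M.det)
    (h1 : ∃ A : Matrix.SpecialLinearGroup (Fin 2) ℤ, (q : ℤ) ∣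
      ((A : Matrix (Fin 2) (Fin 2) ℤ) * M *
        ((A⁻¹ : Matrix.SpecialLinearGroup (Fin 2) ℤ) : Matrix (Fin 2) (Fin 2) ℤ)) 1 0)
    (k : ℕ) (hk : 1 ≤ k) :
    ∃ A : Matrix.SpecialLinearGroup (Fin 2) ℤ, (q : ℤ) ^ k ∣
      ((A : Matrix (Fin 2) (Fin 2) ℤ) * M *
        ((A⁻¹ : Matrix.SpecialLinearGroup (Fin 2) ℤ) : Matrix (Fin 2) (Fin 2) ℤ)) 1 0 := by
  induction k, hk using Nat.le_induction with
  | base => simpa using h1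
  | succ k hk ih =>
    obtain ⟨A, hA⟩ := ih
    have hinv : ((A⁻¹ : Matrix.SpecialLinearGroup (Fin 2) ℤ) : Matrix (Fin 2) (Fin 2) ℤ) *
        (A : Matrix (Fin 2) (Fin 2) ℤ) = 1 := by
      rw [← Matrix.SpecialLinearGroup.coe_mul, inv_mul_cancel, Matrix.SpecialLinearGroup.coe_one]
    obtain ⟨B, hB⟩ := exists_lift q hq k hk _ (by
      rwa [Matrix.trace_mul_comm, ← mul_assoc, hinv, one_mul, Matrix.det_mul, Matrix.det_mul,
        Matrix.SpecialLinearGroup.det_coe, Matrix.SpecialLinearGroup.det_coe, one_mul,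
        mul_one]) hA
    refine ⟨B * A, ?_⟩
    rw [_root_.mul_inv_rev, Matrix.SpecialLinearGroup.coe_mul, Matrix.SpecialLinearGroup.coe_mul]
    simpa only [mul_assoc] using hB

/-- An integer matrix whose characteristic polynomial modulo a prime `q` has two distinct
roots can be conjugated by an element of `SL₂(ℤ)` into a matrix congruent to an upper
triangular matrix modulo `q^k`. -/
theorem conj_upper_triangular (q : ℕ) (hq : q.Prime) (k : ℕ) (hk : 1 ≤ k)
    (M : Matrix (Fin 2) (Fin 2) ℤ)
    (hsplit : ∃ x y : ZMod q, x ≠ y ∧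
      (M.map (fun a : ℤ => (a : ZMod q))).charpoly = (X - C x) * (X - C y)) :
    ∃ A : Matrix.SpecialLinearGroup (Fin 2) ℤ, ∃ T : Matrix (Fin 2) (Fin 2) ℤ,
      T 1 0 = 0 ∧
      ∀ i j, ((q : ℤ) ^ k) ∣
        (((A : Matrix (Fin 2) (Fin 2) ℤ) * M *
          ((A⁻¹ : Matrix.SpecialLinearGroup (Fin 2) ℤ) : Matrix (Fin 2) (Fin 2) ℤ)) i j
          - T i j) := by
  have : Fact q.Prime := ⟨hq⟩
  obtain ⟨x, y, hxy, hc⟩ := hsplit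
  obtain ⟨ht, hd⟩ := trace_det_of_charpoly _ x y hxy hc
  simp only [Matrix.map_apply] at ht hd
  have hD : ¬ (q : ℤ) ∣ M.trace ^ 2 - 4 * M.det := by
    rw [← ZMod.intCast_zmod_eq_zero_iff_dvd, Matrix.trace_fin_two, Matrix.det_fin_two]
    push_cast
    rw [ht, hd]
    intro h
    have h2 : (x - y) ^ 2 = 0 := by linear_combination h
    exact hxy (sub_eq_zero.mp (pow_eq_zero_iff two_ne_zero |>.mp h2))
  obtain ⟨A, hA⟩ := exists_conj_dvd q hq M hD (exists_conj_mod_prime q M x y ht hd) k hk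
  set N := (A : Matrix (Fin 2) (Fin 2) ℤ) * M *
    ((A⁻¹ : Matrix.SpecialLinearGroup (Fin 2) ℤ) : Matrix (Fin 2) (Fin 2) ℤ) with hN
  refine ⟨A, !![N 0 0, N 0 1; 0, N 1 1], rfl, ?_⟩
  rw [← hN]
  intro i j
  fin_cases i <;> fin_cases j
  · simp
  · simp
  · simpa using hA
  · simp
end
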